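/- Let g be the heat kernel on the flat torus D = [0,2π]². For every β ∈ (0, 4/3) there exists C_β > 0 such that for all s > 0 and x ∈ D: ∫_D |∇_y g(s,x,y)|^β dy ≤ C_β s^{-3β/2 + 1}. -/

import Mathlib

open Real MeasureTheory

/-- The heat kernel on the flat torus `[0,2π]²`, given by the method of images. -/
noncomputable def torusHeatKernel (t : ℝ) (x y : ℝ × ℝ) : ℝ :=
  (1 / (4 * π * t)) * ∑' k : ℤ × ℤ,
    Real.exp (-((x.1 - y.1 + 2 * π * k.1) ^ 2 + (x.2 - y.2 + 2 * π * k.2) ^ 2) / (4 * t))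

/-- The Gaussian `exp (-u ^ 2 / τ)` summed over all translates of `u` by `2πℤ`. -/
noncomputable def wrappedGaussian (τ u : ℝ) : ℝ :=
  ∑' k : ℤ, Real.exp (-(u + 2 * π * k) ^ 2 / τ)

lemma summable_exp_neg_mul_int_sq {c : ℝ} (hc : 0 < c) :
    Summable fun k : ℤ => Real.exp (-c * (k : ℝ) ^ 2) := by
  have h := summable_pow_mul_jacobiTheta₂_term_bound 0 (div_pos hc pi_pos) 0
  refine h.congr fun k => ?_
  rw [pow_zero, one_mul]
  congr 1
  field_simp
  ring

lemma exp_wrapped_le {τ : ℝ} (hτ : 0 < τ) (u : ℝ) (k : ℤ) :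
    Real.exp (-(u + 2 * π * k) ^ 2 / τ) ≤
      Real.exp (u ^ 2 / τ) * Real.exp (-(2 * π ^ 2 / τ) * (k : ℝ) ^ 2) := by
  rw [← Real.exp_add, Real.exp_le_exp]
  have : u ^ 2 / τ + -(2 * π ^ 2 / τ) * (k : ℝ) ^ 2 = (u ^ 2 - 2 * π ^ 2 * (k : ℝ) ^ 2) / τ := by
    ring
  rw [this]
  gcongr
  nlinarith [sq_nonneg (2 * u + 2 * π * k)]

lemma summable_wrappedGaussian {τ : ℝ} (hτ : 0 < τ) (u : ℝ) :
    Summable fun k : ℤ => Real.exp (-(u + 2 * π * k) ^ 2 / τ) :=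
  .of_nonneg_of_le (fun _ => (Real.exp_pos _).le) (exp_wrapped_le hτ u)
    ((summable_exp_neg_mul_int_sq (by positivity)).mul_left _)

lemma wrappedGaussian_nonneg (τ u : ℝ) : 0 ≤ wrappedGaussian τ u :=
  tsum_nonneg fun _ => (Real.exp_pos _).le

lemma wrappedGaussian_mono {τ τ' : ℝ} (hτ : 0 < τ) (h : τ ≤ τ') (u : ℝ) :
    wrappedGaussian τ u ≤ wrappedGaussian τ' u := by
  refine (summable_wrappedGaussian hτ u).tsum_le_tsum (fun k => ?_)
    (summable_wrappedGaussian (hτ.trans_le h) u)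
  rw [Real.exp_le_exp, neg_div, neg_div, neg_le_neg_iff]
  gcongr

lemma abs_deriv_gaussian_le {τ : ℝ} (hτ : 0 < τ) (w : ℝ) :
    |Real.exp (-w ^ 2 / τ) * (-(2 * w) / τ)| ≤ 2 / √τ * Real.exp (-w ^ 2 / (2 * τ)) := by
  have hs := Real.sqrt_pos.2 hτ
  have hss := Real.sq_sqrt hτ.le
  obtain ⟨x, rfl⟩ : ∃ x, w = x * √τ := ⟨w / √τ, by field_simp⟩
  have e1 : -(x * √τ) ^ 2 / τ = -x ^ 2 / 2 + -x ^ 2 / 2 := by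
    rw [mul_pow, hss]; field_simp; ring
  have e2 : -(x * √τ) ^ 2 / (2 * τ) = -x ^ 2 / 2 := by
    rw [mul_pow, hss]; field_simp
  have e3 : -(2 * (x * √τ)) / τ = -(2 / √τ * x) := by
    nth_rw 2 [← hss]; field_simp
  rw [e1, e2, e3, Real.exp_add, abs_mul, abs_neg, abs_mul (2 / √τ), abs_of_pos (by positivity),
    abs_of_pos (show 0 < 2 / √τ by positivity)]
  have h1 : Real.exp (-x ^ 2 / 2) * |x| ≤ 1 := by
    have h2 : |x| ≤ Real.exp (x ^ 2 / 2) := by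
      refine le_trans ?_ (Real.add_one_le_exp _)
      nlinarith [sq_nonneg (|x| - 1), sq_abs x]
    rw [neg_div, Real.exp_neg, inv_mul_le_iff₀ (Real.exp_pos _)]
    simpa using h2
  calc _ = 2 / √τ * Real.exp (-x ^ 2 / 2) * (Real.exp (-x ^ 2 / 2) * |x|) := by ring
    _ ≤ 2 / √τ * Real.exp (-x ^ 2 / 2) * 1 := by gcongr
    _ = _ := mul_one _

lemma hasDerivAt_wrappedGaussian {τ : ℝ} (hτ : 0 < τ) (u : ℝ) :
    ∃ D, HasDerivAt (wrappedGaussian τ) D u ∧ |D| ≤ 2 / √τ * wrappedGaussian (2 * τ) u := by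
  have hτ2 : 0 < 2 * τ := by positivity
  refine ⟨∑' k : ℤ, Real.exp (-(u + 2 * π * k) ^ 2 / τ) * (-(2 * (u + 2 * π * k)) / τ), ?_, ?_⟩
  · have hsum : Summable fun k : ℤ => 2 / √τ * (Real.exp ((|u| + 1) ^ 2 / (2 * τ)) *
        Real.exp (-(2 * π ^ 2 / (2 * τ)) * (k : ℝ) ^ 2)) :=
      ((summable_exp_neg_mul_int_sq (by positivity)).mul_left _).mul_left _
    refine hasDerivAt_tsum_of_isPreconnected
      (g := fun (k : ℤ) v => Real.exp (-(v + 2 * π * k) ^ 2 / τ))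
      (g' := fun (k : ℤ) v => Real.exp (-(v + 2 * π * k) ^ 2 / τ) * (-(2 * (v + 2 * π * k)) / τ))
      hsum (Metric.isOpen_ball (x := u) (ε := 1)) (convex_ball u 1).isPreconnected
      (fun k v _ => ?_) (fun k v hv => ?_) (Metric.mem_ball_self one_pos)
      (summable_wrappedGaussian hτ u) (Metric.mem_ball_self one_pos)
    · have h := ((((hasDerivAt_id v).add_const (2 * π * (k : ℝ))).pow 2).neg.div_const τ).exp
      simpa using h
    · refine (abs_deriv_gaussian_le hτ _).trans ?_
      gcongr
      refine (exp_wrapped_le hτ2 v k).trans ?_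
      gcongr 1
      rw [Real.exp_le_exp]
      rw [Metric.mem_ball, Real.dist_eq] at hv
      have : |v| ≤ |u| + 1 := by
        have := abs_sub_abs_le_abs_sub v u
        linarith
      rw [← sq_abs v]
      gcongr
  · have h := (summable_wrappedGaussian hτ2 u).mul_left (2 / √τ)
    rw [wrappedGaussian, ← tsum_mul_left]
    exact tsum_of_norm_bounded (E := ℝ) h.hasSum fun k => abs_deriv_gaussian_le hτ _

/-- Each point of `[-2π, 2π]` can be moved to `[-π, π]` by a translation by `-2π`, `0` or `2π`. -/
lemma exists_translate_abs_le_pi {u : ℝ} (hu : |u| ≤ 2 * π) :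
    ∃ j ∈ Finset.Icc (-1 : ℤ) 1, |u + 2 * π * j| ≤ π := by
  rw [abs_le] at hu
  rcases le_or_gt u (-π) with h | h
  · exact ⟨1, by simp, by rw [abs_le]; push_cast; constructor <;> linarith⟩
  rcases le_or_gt u π with h' | h'
  · exact ⟨0, by simp, by rw [abs_le]; push_cast; constructor <;> linarith⟩
  · exact ⟨-1, by simp, by rw [abs_le]; push_cast; constructor <;> linarith⟩

lemma sq_le_sq_translate {u : ℝ} (hu : |u| ≤ π) (m : ℤ) : u ^ 2 ≤ (u + 2 * π * m) ^ 2 := by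
  have h1 : |(m : ℝ)| ≤ (m : ℝ) ^ 2 := by
    rw [← sq_abs]
    rcases eq_or_ne m 0 with rfl | hm
    · simp
    · have : (1 : ℝ) ≤ |(m : ℝ)| := by exact_mod_cast Int.one_le_abs hm
      nlinarith
  have h2 : |(m : ℝ) * u| ≤ (m : ℝ) ^ 2 * π := by
    rw [abs_mul]
    exact mul_le_mul h1 hu (abs_nonneg _) (sq_nonneg _)
  nlinarith [neg_abs_le ((m : ℝ) * u), pi_pos]

lemma wrappedGaussian_le_exp (T : ℝ) (hT : 0 < T) :
    ∃ M : ℝ, 0 < M ∧ ∀ τ, 0 < τ → τ ≤ T → ∀ u, |u| ≤ 2 * π →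
      ∃ j ∈ Finset.Icc (-1 : ℤ) 1,
        wrappedGaussian τ u ≤ M * Real.exp (-(u + 2 * π * j) ^ 2 / (2 * τ)) := by
  refine ⟨∑' k : ℤ, Real.exp ((2 * π) ^ 2 / (2 * T)) *
    Real.exp (-(2 * π ^ 2 / (2 * T)) * (k : ℝ) ^ 2), ?_, fun τ hτ hτT u hu => ?_⟩
  · exact ((summable_exp_neg_mul_int_sq (by positivity)).mul_left _).tsum_pos
      (fun _ => by positivity) 0 (by positivity)
  obtain ⟨j, hj, hju⟩ := exists_translate_abs_le_pi hu
  refine ⟨j, hj, ?_⟩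
  rw [← tsum_mul_right]
  refine (summable_wrappedGaussian hτ u).tsum_le_tsum (fun k => ?_)
    (((summable_exp_neg_mul_int_sq (by positivity)).mul_left _).mul_right _)
  have e : -(u + 2 * π * k) ^ 2 / τ =
      -(u + 2 * π * k) ^ 2 / (2 * τ) + -(u + 2 * π * k) ^ 2 / (2 * τ) := by
    field_simp
    ring
  rw [e, Real.exp_add]
  have hmin : (u + 2 * π * j) ^ 2 ≤ (u + 2 * π * k) ^ 2 := by
    have h := sq_le_sq_translate hju (k - j)
    push_cast at h
    convert h using 2
    ring
  refine mul_le_mul ?_ ?_ (by positivity) (by positivity)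
  · calc _ ≤ Real.exp (-(u + 2 * π * k) ^ 2 / (2 * T)) := by
          rw [Real.exp_le_exp, neg_div, neg_div, neg_le_neg_iff]
          gcongr
      _ ≤ _ := exp_wrapped_le (by positivity) u k
      _ ≤ _ := by
          gcongr ?_ * _
          rw [Real.exp_le_exp, ← sq_abs u]
          gcongr
  · rw [Real.exp_le_exp, neg_div, neg_div, neg_le_neg_iff]
    gcongr

/-- Poisson summation for the wrapped Gaussian. -/
lemma wrappedGaussian_eq_fourier {t : ℝ} (ht : 0 < t) (u : ℝ) :
    (wrappedGaussian (4 * t) u : ℂ) = (√(t / π) : ℝ) *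
      ∑' n : ℤ, (Real.exp (-t * (n : ℝ) ^ 2) : ℂ) *
        Complex.exp (Complex.I * (-(u * n) : ℝ)) := by
  have ha : 0 < t / π := by positivity
  have hπ : (π : ℂ) ≠ 0 := by exact_mod_cast pi_pos.ne'
  have htc : (t : ℂ) ≠ 0 := by exact_mod_cast ht.ne'
  have h := Complex.tsum_exp_neg_quadratic (a := ((t / π : ℝ) : ℂ)) (by simpa using ha)
    (-Complex.I * u / (2 * π))
  have hc : ((t / π : ℝ) : ℂ) ^ (1 / 2 : ℂ) = (√(t / π) : ℝ) := by
    rw [Real.sqrt_eq_rpow, Complex.ofReal_cpow ha.le]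
    norm_num
  have hne : ((√(t / π) : ℝ) : ℂ) ≠ 0 := by
    exact_mod_cast (Real.sqrt_pos.2 ha).ne'
  have e1 : (∑' n : ℤ, (Real.exp (-t * (n : ℝ) ^ 2) : ℂ) *
        Complex.exp (Complex.I * (-(u * n) : ℝ))) =
      ∑' n : ℤ, Complex.exp (-π * ((t / π : ℝ) : ℂ) * n ^ 2 +
        2 * π * (-Complex.I * u / (2 * π)) * n) := by
    refine tsum_congr fun n => ?_
    rw [Complex.ofReal_exp, ← Complex.exp_add]
    congr 1
    push_cast
    field_simp
  have e2 : (wrappedGaussian (4 * t) u : ℂ) = ∑' n : ℤ, Complex.exp (-π / ((t / π : ℝ) : ℂ) *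
      (n + Complex.I * (-Complex.I * u / (2 * π))) ^ 2) := by
    rw [wrappedGaussian, Complex.ofReal_tsum]
    refine tsum_congr fun n => ?_
    rw [Complex.ofReal_exp]
    congr 1
    have hI : Complex.I * (-Complex.I * u / (2 * π)) = u / (2 * π) := by
      linear_combination (-(u : ℂ) / (2 * π)) * Complex.I_sq
    rw [hI]
    push_cast
    field_simp
    ring
  rw [e1, h, hc, ← e2]
  field_simp

lemma abs_int_mul_exp_le {t : ℝ} (ht : 1 ≤ t) (n : ℤ) :
    |(n : ℝ)| * Real.exp (-t * (n : ℝ) ^ 2) ≤ 2 / t * Real.exp (-(1 / 2) * (n : ℝ) ^ 2) := by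
  have ht0 : 0 < t := by linarith
  have h1 : |(n : ℝ)| ≤ (n : ℝ) ^ 2 := by
    rw [← sq_abs]
    rcases eq_or_ne n 0 with rfl | hn
    · simp
    · have : (1 : ℝ) ≤ |(n : ℝ)| := by exact_mod_cast Int.one_le_abs hn
      nlinarith
  have h2 : |(n : ℝ)| ≤ 2 / t * Real.exp (t * (n : ℝ) ^ 2 / 2) := by
    have := Real.add_one_le_exp (t * (n : ℝ) ^ 2 / 2)
    calc |(n : ℝ)| ≤ (n : ℝ) ^ 2 := h1
      _ = 2 / t * (t * (n : ℝ) ^ 2 / 2) := by field_simp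
      _ ≤ _ := by gcongr; linarith
  calc _ ≤ 2 / t * Real.exp (t * (n : ℝ) ^ 2 / 2) * Real.exp (-t * (n : ℝ) ^ 2) := by gcongr
    _ = 2 / t * Real.exp (-(t / 2) * (n : ℝ) ^ 2) := by
      rw [mul_assoc, ← Real.exp_add]; congr 2; ring
    _ ≤ _ := by gcongr

lemma summable_fourier_wrappedGaussian {t : ℝ} (ht : 0 < t) (u : ℝ) :
    Summable fun n : ℤ => (Real.exp (-t * (n : ℝ) ^ 2) : ℂ) *
        Complex.exp (Complex.I * (-(u * n) : ℝ)) := by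
  refine (summable_exp_neg_mul_int_sq ht).of_norm_bounded fun n => ?_
  rw [norm_mul, Complex.norm_exp_I_mul_ofReal, mul_one, Complex.norm_real,
    Real.norm_of_nonneg (Real.exp_pos _).le]

lemma wrappedGaussian_large_time :
    ∃ M : ℝ, 0 < M ∧ ∀ t, 1 ≤ t → ∀ u, wrappedGaussian (4 * t) u ≤ M * √t ∧
      ∀ D, HasDerivAt (wrappedGaussian (4 * t)) D u → |D| ≤ M * (√t / t) := by
  set S : ℝ := ∑' n : ℤ, Real.exp (-(1 / 2) * (n : ℝ) ^ 2)
  have hS := summable_exp_neg_mul_int_sq (c := 1 / 2) (by norm_num)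
  have hS0 : 0 < S := hS.tsum_pos (fun _ => by positivity) 0 (by positivity)
  refine ⟨2 * S, by positivity, fun t ht u => ?_⟩
  have ht0 : 0 < t := by linarith
  have hsq : √(t / π) ≤ √t :=
    Real.sqrt_le_sqrt (div_le_self ht0.le (by linarith [pi_gt_three]))
  constructor
  · rw [← abs_of_nonneg (wrappedGaussian_nonneg (4 * t) u), ← Real.norm_eq_abs,
      ← Complex.norm_real, wrappedGaussian_eq_fourier ht0, norm_mul, Complex.norm_real,
      Real.norm_of_nonneg (Real.sqrt_nonneg _)]
    have : ‖∑' n : ℤ, (Real.exp (-t * (n : ℝ) ^ 2) : ℂ) *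
        Complex.exp (Complex.I * (-(u * n) : ℝ))‖ ≤ S := by
      refine tsum_of_norm_bounded hS.hasSum fun n => ?_
      rw [norm_mul, Complex.norm_exp_I_mul_ofReal, mul_one, Complex.norm_real,
        Real.norm_of_nonneg (Real.exp_pos _).le]
      gcongr
      linarith
    calc _ ≤ √t * S := by gcongr
      _ ≤ _ := by nlinarith [Real.sqrt_nonneg t]
  · intro D hD
    refine hD.le_of_lip' (by positivity) (Filter.Eventually.of_forall fun v => ?_)
    rw [← Complex.norm_real, Complex.ofReal_sub, wrappedGaussian_eq_fourier ht0,
      wrappedGaussian_eq_fourier ht0, ← mul_sub, norm_mul, Complex.norm_real,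
      Real.norm_of_nonneg (Real.sqrt_nonneg _),
      ← (summable_fourier_wrappedGaussian ht0 v).tsum_sub (summable_fourier_wrappedGaussian ht0 u)]
    have : ‖∑' n : ℤ, ((Real.exp (-t * (n : ℝ) ^ 2) : ℂ) *
        Complex.exp (Complex.I * (-(v * n) : ℝ)) - (Real.exp (-t * (n : ℝ) ^ 2) : ℂ) *
        Complex.exp (Complex.I * (-(u * n) : ℝ)))‖ ≤ 2 / t * ‖v - u‖ * S := by
      refine tsum_of_norm_bounded (hS.hasSum.mul_left _) fun n => ?_
      have e : Complex.exp (Complex.I * (-(v * n) : ℝ)) = Complex.exp (Complex.I * (-(u * n) : ℝ)) *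
          Complex.exp (Complex.I * (-((v - u) * n) : ℝ)) := by
        rw [← Complex.exp_add]; congr 1; push_cast; ring
      rw [← mul_sub, e, ← mul_sub_one, norm_mul, norm_mul, Complex.norm_exp_I_mul_ofReal, one_mul,
        Complex.norm_real, Real.norm_of_nonneg (Real.exp_pos _).le]
      calc _ ≤ Real.exp (-t * (n : ℝ) ^ 2) * ‖(-((v - u) * n) : ℝ)‖ := by
            gcongr
            exact norm_exp_I_mul_ofReal_sub_one_le
        _ = ‖v - u‖ * (|(n : ℝ)| * Real.exp (-t * (n : ℝ) ^ 2)) := by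
            rw [norm_neg, norm_mul, Real.norm_eq_abs (n : ℝ)]; ring
        _ ≤ ‖v - u‖ * (2 / t * Real.exp (-(1 / 2) * (n : ℝ) ^ 2)) :=
            mul_le_mul_of_nonneg_left (abs_int_mul_exp_le ht n) (norm_nonneg _)
        _ = _ := by ring
    calc _ ≤ √t * (2 / t * ‖v - u‖ * S) := by gcongr
      _ = _ := by ring

lemma torusHeatKernel_eq {t : ℝ} (ht : 0 < t) (x y : ℝ × ℝ) :
    torusHeatKernel t x y = 1 / (4 * π * t) *
      (wrappedGaussian (4 * t) (x.1 - y.1) * wrappedGaussian (4 * t) (x.2 - y.2)) := by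
  have ht4 : 0 < 4 * t := by positivity
  rw [torusHeatKernel, wrappedGaussian, wrappedGaussian, tsum_mul_tsum_of_summable_norm
    (summable_wrappedGaussian ht4 _).norm (summable_wrappedGaussian ht4 _).norm]
  congr 1
  refine tsum_congr fun k => ?_
  rw [← Real.exp_add]
  congr 1
  ring

lemma norm_fderiv_torusHeatKernel_le {t : ℝ} (ht : 0 < t) (x y : ℝ × ℝ) {D₁ D₂ : ℝ}
    (h₁ : HasDerivAt (wrappedGaussian (4 * t)) D₁ (x.1 - y.1))
    (h₂ : HasDerivAt (wrappedGaussian (4 * t)) D₂ (x.2 - y.2)) :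
    ‖fderiv ℝ (fun y => torusHeatKernel t x y) y‖ ≤ 1 / (4 * π * t) *
      (wrappedGaussian (4 * t) (x.1 - y.1) * |D₂| +
        wrappedGaussian (4 * t) (x.2 - y.2) * |D₁|) := by
  have g₁ : HasFDerivAt (fun y : ℝ × ℝ => wrappedGaussian (4 * t) (x.1 - y.1))
      (D₁ • -ContinuousLinearMap.fst ℝ ℝ ℝ) y :=
    HasDerivAt.comp_hasFDerivAt (f := fun y : ℝ × ℝ => x.1 - y.1) y h₁
      (hasFDerivAt_fst.const_sub x.1)
  have g₂ : HasFDerivAt (fun y : ℝ × ℝ => wrappedGaussian (4 * t) (x.2 - y.2))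
      (D₂ • -ContinuousLinearMap.snd ℝ ℝ ℝ) y :=
    HasDerivAt.comp_hasFDerivAt (f := fun y : ℝ × ℝ => x.2 - y.2) y h₂
      (hasFDerivAt_snd.const_sub x.2)
  have g : HasFDerivAt (fun y => torusHeatKernel t x y) _ y :=
    ((g₁.mul g₂).const_mul (1 / (4 * π * t))).congr_of_eventuallyEq
      (Filter.Eventually.of_forall fun y => torusHeatKernel_eq ht x y)
  rw [g.fderiv, norm_smul, Real.norm_of_nonneg (by positivity)]
  gcongr
  refine (norm_add_le _ _).trans (add_le_add ?_ ?_)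
  · rw [norm_smul, norm_smul, norm_neg, Real.norm_of_nonneg (wrappedGaussian_nonneg _ _),
      Real.norm_eq_abs]
    gcongr
    · exact wrappedGaussian_nonneg _ _
    · exact mul_le_of_le_one_right (abs_nonneg _) (ContinuousLinearMap.norm_snd_le ..)
  · rw [norm_smul, norm_smul, norm_neg, Real.norm_of_nonneg (wrappedGaussian_nonneg _ _),
      Real.norm_eq_abs]
    gcongr
    · exact wrappedGaussian_nonneg _ _
    · exact mul_le_of_le_one_right (abs_nonneg _) (ContinuousLinearMap.norm_fst_le ..)

/-- Three neighbouring Gaussians, which dominate the wrapped Gaussian on `[-2π, 2π]`. -/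
noncomputable def nearbyGaussians (b u : ℝ) : ℝ :=
  ∑ j ∈ Finset.Icc (-1 : ℤ) 1, Real.exp (-b * (u + 2 * π * j) ^ 2)

lemma nearbyGaussians_nonneg (b u : ℝ) : 0 ≤ nearbyGaussians b u :=
  Finset.sum_nonneg fun _ _ => (Real.exp_pos _).le

lemma continuous_nearbyGaussians (b : ℝ) : Continuous (nearbyGaussians b) := by
  unfold nearbyGaussians
  fun_prop

lemma setIntegral_nearbyGaussians_le {b : ℝ} (hb : 0 < b) (x : ℝ) (s : Set ℝ) :
    ∫ y in s, nearbyGaussians b (x - y) ≤ 3 * √(π / b) := by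
  have hint (j : ℤ) : Integrable fun y : ℝ => Real.exp (-b * (x - y + 2 * π * j) ^ 2) := by
    have h := (integrable_exp_neg_mul_sq hb).comp_sub_left (x + 2 * π * j)
    refine h.congr (Filter.Eventually.of_forall fun y => ?_)
    dsimp only
    congr 2
    ring
  have hval (j : ℤ) : ∫ y : ℝ, Real.exp (-b * (x - y + 2 * π * j) ^ 2) = √(π / b) := by
    rw [← integral_gaussian b,
      ← integral_sub_left_eq_self (fun y => Real.exp (-b * y ^ 2)) volume (x + 2 * π * j)]
    refine integral_congr_ae (Filter.Eventually.of_forall fun y => ?_)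
    dsimp only
    congr 2
    ring
  unfold nearbyGaussians
  rw [integral_finsetSum _ fun j _ => (hint j).integrableOn]
  calc _ ≤ ∑ j ∈ Finset.Icc (-1 : ℤ) 1, √(π / b) := by
        refine Finset.sum_le_sum fun j _ => ?_
        rw [← hval j]
        exact setIntegral_le_integral (hint j)
          (Filter.Eventually.of_forall fun y => (Real.exp_pos _).le)
    _ = _ := by simp

lemma wrappedGaussian_rpow_le {β : ℝ} (hβ : 0 < β) (T : ℝ) (hT : 0 < T) :
    ∃ M : ℝ, 0 < M ∧ ∀ τ, 0 < τ → τ ≤ T → ∀ u, |u| ≤ 2 * π →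
      wrappedGaussian τ u ^ β ≤ M * nearbyGaussians (β / (2 * τ)) u := by
  obtain ⟨M, hM, h⟩ := wrappedGaussian_le_exp T hT
  refine ⟨M ^ β, by positivity, fun τ hτ hτT u hu => ?_⟩
  obtain ⟨j, hj, hle⟩ := h τ hτ hτT u hu
  calc _ ≤ (M * Real.exp (-(u + 2 * π * j) ^ 2 / (2 * τ))) ^ β :=
        Real.rpow_le_rpow (wrappedGaussian_nonneg _ _) hle hβ.le
    _ = M ^ β * Real.exp (-(β / (2 * τ)) * (u + 2 * π * j) ^ 2) := by
        rw [Real.mul_rpow hM.le (Real.exp_pos _).le, ← Real.exp_mul]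
        congr 2
        ring
    _ ≤ _ := by
        gcongr
        exact Finset.single_le_sum
          (f := fun j : ℤ => Real.exp (-(β / (2 * τ)) * (u + 2 * π * j) ^ 2))
          (fun _ _ => (Real.exp_pos _).le) hj

lemma norm_fderiv_torusHeatKernel_le_wrappedGaussian {t : ℝ} (ht : 0 < t) (x y : ℝ × ℝ) :
    ‖fderiv ℝ (fun y => torusHeatKernel t x y) y‖ ≤ t ^ (-(3 : ℝ) / 2) *
      (wrappedGaussian (8 * t) (x.1 - y.1) * wrappedGaussian (8 * t) (x.2 - y.2)) := by
  have ht4 : 0 < 4 * t := by positivity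
  obtain ⟨D₁, h₁, b₁⟩ := hasDerivAt_wrappedGaussian ht4 (x.1 - y.1)
  obtain ⟨D₂, h₂, b₂⟩ := hasDerivAt_wrappedGaussian ht4 (x.2 - y.2)
  refine (norm_fderiv_torusHeatKernel_le ht x y h₁ h₂).trans ?_
  have a₁ := wrappedGaussian_mono ht4 (show 4 * t ≤ 8 * t by linarith) (x.1 - y.1)
  have a₂ := wrappedGaussian_mono ht4 (show 4 * t ≤ 8 * t by linarith) (x.2 - y.2)
  have n₁ := wrappedGaussian_nonneg (8 * t) (x.1 - y.1)
  have n₂ := wrappedGaussian_nonneg (8 * t) (x.2 - y.2)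
  have hs : √(4 * t) = 2 * √t := by
    rw [Real.sqrt_mul (by norm_num), show (4 : ℝ) = 2 ^ 2 by norm_num, Real.sqrt_sq (by norm_num)]
  rw [show 2 * (4 * t) = 8 * t by ring, hs] at b₁ b₂
  have hpow : t ^ (-(3 : ℝ) / 2) = 1 / (t * √t) := by
    rw [Real.sqrt_eq_rpow, ← Real.rpow_one_add' ht.le (by norm_num), neg_div, Real.rpow_neg ht.le]
    norm_num
  have hst := Real.sqrt_pos.2 ht
  set W₁ := wrappedGaussian (8 * t) (x.1 - y.1)
  set W₂ := wrappedGaussian (8 * t) (x.2 - y.2)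
  calc _ ≤ 1 / (4 * π * t) * (W₁ * (2 / (2 * √t) * W₂) + W₂ * (2 / (2 * √t) * W₁)) := by
        gcongr
    _ = 1 / (2 * π) * (1 / (t * √t) * (W₁ * W₂)) := by field_simp; ring
    _ ≤ 1 * (1 / (t * √t) * (W₁ * W₂)) := by
        gcongr
        rw [div_le_one (by positivity)]
        linarith [pi_gt_three]
    _ = _ := by rw [one_mul, hpow]

lemma norm_fderiv_torusHeatKernel_large_time :
    ∃ M : ℝ, 0 < M ∧ ∀ t, 1 ≤ t → ∀ x y,
      ‖fderiv ℝ (fun y => torusHeatKernel t x y) y‖ ≤ M * t⁻¹ := by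
  obtain ⟨M, hM, h⟩ := wrappedGaussian_large_time
  refine ⟨M ^ 2, by positivity, fun t ht x y => ?_⟩
  have ht0 : 0 < t := by linarith
  have ht4 : 0 < 4 * t := by positivity
  obtain ⟨D₁, h₁, -⟩ := hasDerivAt_wrappedGaussian ht4 (x.1 - y.1)
  obtain ⟨D₂, h₂, -⟩ := hasDerivAt_wrappedGaussian ht4 (x.2 - y.2)
  refine (norm_fderiv_torusHeatKernel_le ht0 x y h₁ h₂).trans ?_
  have a₁ := (h t ht (x.1 - y.1)).1
  have a₂ := (h t ht (x.2 - y.2)).1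
  have b₁ := (h t ht (x.1 - y.1)).2 _ h₁
  have b₂ := (h t ht (x.2 - y.2)).2 _ h₂
  calc _ ≤ 1 / (4 * π * t) *
        (M * √t * (M * (√t / t)) + M * √t * (M * (√t / t))) := by gcongr
    _ = M ^ 2 * (√t ^ 2 / t) * (1 / (2 * π)) * t⁻¹ := by field_simp; ring
    _ = M ^ 2 * (1 / (2 * π)) * t⁻¹ := by rw [Real.sq_sqrt ht0.le, div_self ht0.ne', mul_one]
    _ ≤ M ^ 2 * 1 * t⁻¹ := by
        gcongr
        rw [div_le_one (by positivity)]
        linarith [pi_gt_three]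
    _ = _ := by ring

lemma setIntegral_fderiv_torusHeatKernel_small_time {β : ℝ} (hβ : 0 < β) :
    ∃ C : ℝ, 0 < C ∧ ∀ t : ℝ, 0 < t → t ≤ 1 →
      ∀ x ∈ Set.Icc ((0 : ℝ), (0 : ℝ)) (2 * π, 2 * π),
      (∫ y in Set.Icc ((0 : ℝ), (0 : ℝ)) (2 * π, 2 * π),
        ‖fderiv ℝ (fun y => torusHeatKernel t x y) y‖ ^ β)
        ≤ C * t ^ (-(3 * β) / 2 + 1) := by
  obtain ⟨M, hM, h⟩ := wrappedGaussian_rpow_le hβ 8 (by norm_num)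
  refine ⟨M ^ 2 * (9 * (16 * π / β)), by positivity, fun t ht ht1 x hx => ?_⟩
  have hτ : 0 < 8 * t := by positivity
  set b := β / (2 * (8 * t)) with hb_def
  have hb : 0 < b := by positivity
  set K := t ^ (-(3 * β) / 2) * M ^ 2 with hK_def
  have hK : 0 ≤ K := by positivity
  have hcont : Continuous fun y : ℝ × ℝ =>
      K * (nearbyGaussians b (x.1 - y.1) * nearbyGaussians b (x.2 - y.2)) := by
    have := continuous_nearbyGaussians b
    fun_prop
  have hbound : ∀ y ∈ Set.Icc ((0 : ℝ), (0 : ℝ)) (2 * π, 2 * π),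
      ‖fderiv ℝ (fun y => torusHeatKernel t x y) y‖ ^ β ≤
        K * (nearbyGaussians b (x.1 - y.1) * nearbyGaussians b (x.2 - y.2)) := by
    intro y hy
    obtain ⟨⟨hx1, hx2⟩, hx3, hx4⟩ := hx
    obtain ⟨⟨hy1, hy2⟩, hy3, hy4⟩ := hy
    dsimp only at hx1 hx2 hx3 hx4 hy1 hy2 hy3 hy4
    have k₁ := h (8 * t) hτ (by linarith) (x.1 - y.1)
      (by rw [abs_le]; constructor <;> linarith)
    have k₂ := h (8 * t) hτ (by linarith) (x.2 - y.2)
      (by rw [abs_le]; constructor <;> linarith)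
    have n₁ := wrappedGaussian_nonneg (8 * t) (x.1 - y.1)
    have n₂ := wrappedGaussian_nonneg (8 * t) (x.2 - y.2)
    have m₁ := nearbyGaussians_nonneg b (x.1 - y.1)
    calc _ ≤ (t ^ (-(3 : ℝ) / 2) * (wrappedGaussian (8 * t) (x.1 - y.1) *
          wrappedGaussian (8 * t) (x.2 - y.2))) ^ β :=
          Real.rpow_le_rpow (norm_nonneg _)
            (norm_fderiv_torusHeatKernel_le_wrappedGaussian ht x y) hβ.le
      _ = t ^ (-(3 * β) / 2) * (wrappedGaussian (8 * t) (x.1 - y.1) ^ β *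
          wrappedGaussian (8 * t) (x.2 - y.2) ^ β) := by
          rw [Real.mul_rpow (by positivity) (by positivity), Real.mul_rpow n₁ n₂,
            ← Real.rpow_mul ht.le]
          congr 2
          ring
      _ ≤ t ^ (-(3 * β) / 2) * ((M * nearbyGaussians b (x.1 - y.1)) *
          (M * nearbyGaussians b (x.2 - y.2))) := by gcongr
      _ = _ := by ring
  calc _ ≤ ∫ y in Set.Icc ((0 : ℝ), (0 : ℝ)) (2 * π, 2 * π),
          K * (nearbyGaussians b (x.1 - y.1) * nearbyGaussians b (x.2 - y.2)) :=
        integral_mono_of_nonneg (Filter.Eventually.of_forall fun y => by positivity)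
          (hcont.continuousOn.integrableOn_compact isCompact_Icc)
          (ae_restrict_of_forall_mem measurableSet_Icc hbound)
    _ = K * ((∫ y in Set.Icc 0 (2 * π), nearbyGaussians b (x.1 - y)) *
          ∫ y in Set.Icc 0 (2 * π), nearbyGaussians b (x.2 - y)) := by
        rw [integral_const_mul, ← Set.Icc_prod_Icc, Measure.volume_eq_prod,
          setIntegral_prod_mul (fun y => nearbyGaussians b (x.1 - y))
            (fun y => nearbyGaussians b (x.2 - y))]
    _ ≤ K * ((3 * √(π / b)) * (3 * √(π / b))) := by
        gcongr
        · exact integral_nonneg fun _ => nearbyGaussians_nonneg _ _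
        · exact setIntegral_nearbyGaussians_le hb _ _
        · exact setIntegral_nearbyGaussians_le hb _ _
    _ = K * (9 * (π / b)) := by
        rw [mul_mul_mul_comm 3, Real.mul_self_sqrt (by positivity)]
        norm_num
    _ = _ := by
        rw [Real.rpow_add ht, Real.rpow_one, hK_def, hb_def]
        field_simp
        norm_num

theorem torusHeatKernel_grad_Lbeta_bound (β : ℝ) (hβ : β ∈ Set.Ioo (0:ℝ) (4/3)) :
    ∃ C : ℝ, 0 < C ∧ ∀ s : ℝ, 0 < s →
      ∀ x ∈ Set.Icc ((0:ℝ), (0:ℝ)) (2 * π, 2 * π),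
      (∫ y in Set.Icc ((0:ℝ), (0:ℝ)) (2 * π, 2 * π),
        ‖fderiv ℝ (fun y => torusHeatKernel s x y) y‖ ^ β)
        ≤ C * s ^ (-(3 * β) / 2 + 1) := by
  obtain ⟨hβ0, hβ1⟩ := hβ
  obtain ⟨C, hC, hsmall⟩ := setIntegral_fderiv_torusHeatKernel_small_time hβ0
  obtain ⟨M, hM, hlarge⟩ := norm_fderiv_torusHeatKernel_large_time
  set V : ℝ := volume.real (Set.Icc ((0:ℝ), (0:ℝ)) (2 * π, 2 * π))
  have hV : 0 ≤ V := measureReal_nonneg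
  refine ⟨C + V * M ^ β, by positivity, fun s hs x hx => ?_⟩
  rcases le_total s 1 with h1 | h1
  · refine (hsmall s hs h1 x hx).trans ?_
    gcongr
    exact le_add_of_nonneg_right (by positivity)
  · calc _ ≤ ∫ y in Set.Icc ((0:ℝ), (0:ℝ)) (2 * π, 2 * π), (M * s⁻¹) ^ β :=
          integral_mono_of_nonneg (Filter.Eventually.of_forall fun y => by positivity)
            (integrableOn_const isCompact_Icc.measure_lt_top.ne)
            (Filter.Eventually.of_forall fun y =>
              Real.rpow_le_rpow (norm_nonneg _) (hlarge s h1 x y) hβ0.le)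
      _ = V * M ^ β * s ^ (-β) := by
          rw [setIntegral_const, smul_eq_mul, Real.mul_rpow hM.le (by positivity),
            Real.inv_rpow hs.le, ← Real.rpow_neg hs.le, mul_assoc]
      _ ≤ V * M ^ β * s ^ (-(3 * β) / 2 + 1) := by
          gcongr
          linarith
      _ ≤ _ := by
          gcongr
          exact le_add_of_nonneg_left hC.le
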